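/- Let E, D : [0, ∞) → ℝ be functions with E nonnegative and D nonnegative and locally integrable, and let c₁ᴱ, c₂ᴱ, c, c_T be positive constants. Assume: (i) for all 0 ≤ t₁ < t₂ one has −c₁ᴱ ∫_{t₁}^{t₂} D(t) dt ≥ E(t₂) − E(t₁) ≥ −c₂ᴱ ∫_{t₁}^{t₂} D(t) dt; (ii) there exists T > 4c such that for every a ≥ 0, ∫_a^{a+T} E(t) dt ≤ c (E(a) + E(a+T)) + c_T ∫_a^{a+T} D(t) dt. Then there exist constants C > 0 and λ > 0 such that E(t) ≤ C e^{−λ t} E(0) for all t ≥ 0. -/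

import Mathlib

open MeasureTheory

/-!
The damping only matters through the bound `∫ D ≤ (E s - E t) / c₁` on `[s, t]`, which turns the
observability inequality into `∫ E ≤ (c + k) E(a) + (c - k) E(a + T)` with `k = cT / c₁`. Since `E`
is antitone, the left-hand side is at least `T E(a + T)`, so every window of length `T` contracts
`E` by the factor `q = (c + k) / (T - c + k)`, and `q < 1` as soon as `2 c < T`.
-/

theorem antitoneOn_of_sub_le_neg_mul_integral {E D : ℝ → ℝ} {c₁ : ℝ} (hc₁ : 0 ≤ c₁)
    (hD : ∀ t, 0 ≤ t → 0 ≤ D t)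
    (hdecay : ∀ t₁ t₂ : ℝ, 0 ≤ t₁ → t₁ < t₂ → E t₂ - E t₁ ≤ -c₁ * ∫ t in t₁..t₂, D t) :
    AntitoneOn E (Set.Ici 0) := by
  intro s hs t _ hst
  rcases hst.eq_or_lt with rfl | hlt
  · exact le_rfl
  · have hint : 0 ≤ ∫ u in s..t, D u :=
      intervalIntegral.integral_nonneg hst fun u hu => hD u (le_trans hs hu.1)
    linarith [hdecay s t hs hlt, mul_nonneg hc₁ hint]

theorem sub_mul_le_integral_of_antitoneOn {f : ℝ → ℝ} {a b : ℝ} (hab : a ≤ b)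
    (hf : AntitoneOn f (Set.Icc a b)) : (b - a) * f b ≤ ∫ t in a..b, f t := by
  have hint : IntervalIntegrable f volume a b :=
    AntitoneOn.intervalIntegrable (by rwa [Set.uIcc_of_le hab])
  calc (b - a) * f b = ∫ _ in a..b, f b := by simp
    _ ≤ ∫ t in a..b, f t := intervalIntegral.integral_mono_on hab (by simp) hint
        fun t ht => hf ht (Set.right_mem_Icc.2 hab) ht.2

theorem le_div_mul_of_antitoneOn_of_integral_le {f : ℝ → ℝ} {a b α β : ℝ} (hab : a ≤ b)
    (hf : AntitoneOn f (Set.Icc a b)) (hβ : β < b - a)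
    (hint : ∫ t in a..b, f t ≤ α * f a + β * f b) : f b ≤ α / (b - a - β) * f a := by
  have hlower := sub_mul_le_integral_of_antitoneOn hab hf
  rw [div_mul_eq_mul_div, le_div_iff₀ (sub_pos.2 hβ)]
  linarith

theorem pow_floor_le_inv_mul_exp {q : ℝ} (hq : 0 < q) (hq1 : q ≤ 1) (x : ℝ) :
    q ^ ⌊x⌋₊ ≤ q⁻¹ * Real.exp (Real.log q * x) :=
  calc q ^ ⌊x⌋₊ = q ^ (⌊x⌋₊ : ℝ) := (Real.rpow_natCast q _).symm
    _ ≤ q ^ (x - 1) :=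
        Real.rpow_le_rpow_of_exponent_ge hq hq1 (Nat.sub_one_lt_floor x).le
    _ = q⁻¹ * Real.exp (Real.log q * x) := by
        rw [Real.rpow_sub_one hq.ne', Real.rpow_def_of_pos hq, div_eq_inv_mul]

theorem apply_nat_mul_le_pow_mul {f : ℝ → ℝ} {q T : ℝ} (hq : 0 ≤ q) (hT : 0 ≤ T)
    (hf : ∀ a, 0 ≤ a → f (a + T) ≤ q * f a) (n : ℕ) : f (n * T) ≤ q ^ n * f 0 := by
  have hgeom := le_geom (u := fun k : ℕ => f (k * T)) hq n fun k _ => by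
    simpa only [Nat.cast_add_one, add_one_mul] using hf (k * T) (by positivity)
  simpa only [Nat.cast_zero, zero_mul] using hgeom

theorem le_inv_mul_exp_of_antitoneOn_of_add_le_mul {f : ℝ → ℝ} {q T : ℝ} (hq : 0 < q)
    (hq1 : q ≤ 1) (hT : 0 < T) (hf_zero : 0 ≤ f 0) (hf_anti : AntitoneOn f (Set.Ici 0))
    (hf : ∀ a, 0 ≤ a → f (a + T) ≤ q * f a) {t : ℝ} (ht : 0 ≤ t) :
    f t ≤ q⁻¹ * Real.exp (Real.log q / T * t) * f 0 := by
  have hfloor : ⌊t / T⌋₊ * T ≤ t := (le_div_iff₀ hT).1 (Nat.floor_le (by positivity))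
  calc f t ≤ f (⌊t / T⌋₊ * T) := hf_anti (Set.mem_Ici.2 (by positivity)) ht hfloor
    _ ≤ q ^ ⌊t / T⌋₊ * f 0 := apply_nat_mul_le_pow_mul hq.le hT.le hf _
    _ ≤ q⁻¹ * Real.exp (Real.log q * (t / T)) * f 0 := by
        gcongr
        exact pow_floor_le_inv_mul_exp hq hq1 _
    _ = q⁻¹ * Real.exp (Real.log q / T * t) * f 0 := by rw [mul_div_left_comm, mul_comm t]

theorem integral_le_of_decay_of_observability {E D : ℝ → ℝ} {a b c₁ c cT : ℝ} (hc₁ : 0 < c₁)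
    (hcT : 0 ≤ cT) (hdecay : E b - E a ≤ -c₁ * ∫ t in a..b, D t)
    (hobs : ∫ t in a..b, E t ≤ c * (E a + E b) + cT * ∫ t in a..b, D t) :
    ∫ t in a..b, E t ≤ (c + cT / c₁) * E a + (c - cT / c₁) * E b := by
  have hdamping : ∫ t in a..b, D t ≤ (E a - E b) / c₁ := by
    rw [le_div_iff₀ hc₁]
    linarith
  calc ∫ t in a..b, E t ≤ c * (E a + E b) + cT * ∫ t in a..b, D t := hobs
    _ ≤ c * (E a + E b) + cT * ((E a - E b) / c₁) := by gcongr
    _ = (c + cT / c₁) * E a + (c - cT / c₁) * E b := by ring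

theorem abstract_exponential_stability_general {E D : ℝ → ℝ} {c₁ c cT T : ℝ}
    (hE_zero : 0 ≤ E 0) (hD_nonneg : ∀ t, 0 ≤ t → 0 ≤ D t)
    (hD_loc : LocallyIntegrableOn D (Set.Ici (0 : ℝ)))
    (hc₁ : 0 < c₁) (hc : 0 < c) (hcT : 0 ≤ cT) (hT : 2 * c < T)
    (hdecay : ∀ t₁ t₂ : ℝ, 0 ≤ t₁ → t₁ < t₂ → E t₂ - E t₁ ≤ -c₁ * ∫ t in t₁..t₂, D t)
    (hobs : ∀ a : ℝ, 0 ≤ a →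
      (∫ t in a..(a + T), E t) ≤ c * (E a + E (a + T)) + cT * ∫ t in a..(a + T), D t) :
    ∃ C lam : ℝ, 0 < C ∧ 0 < lam ∧
      ∀ t, 0 ≤ t → E t ≤ C * Real.exp (-lam * t) * E 0 := by
  have hT_pos : 0 < T := by linarith
  have hanti := antitoneOn_of_sub_le_neg_mul_integral hc₁.le hD_nonneg hdecay
  have hk : 0 ≤ cT / c₁ := by positivity
  have hden : 0 < T - (c - cT / c₁) := by linarith
  set q := (c + cT / c₁) / (T - (c - cT / c₁)) with hq_def
  have hq : 0 < q := by positivity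
  have hq1 : q < 1 := by rw [hq_def, div_lt_one hden]; linarith
  have hcontract : ∀ a, 0 ≤ a → E (a + T) ≤ q * E a := fun a ha => by
    have hwindow := integral_le_of_decay_of_observability hc₁ hcT
      (hdecay a (a + T) ha (by linarith)) (hobs a ha)
    simpa only [add_sub_cancel_left] using le_div_mul_of_antitoneOn_of_integral_le (by linarith)
      (hanti.mono fun x hx => ha.trans hx.1) (by linarith) hwindow
  refine ⟨q⁻¹, -(Real.log q / T), inv_pos.2 hq,
    neg_pos.2 (div_neg_of_neg_of_pos (Real.log_neg hq hq1) hT_pos), fun t ht => ?_⟩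
  rw [neg_neg]
  exact le_inv_mul_exp_of_antitoneOn_of_add_le_mul hq hq1.le hT_pos hE_zero hanti hcontract ht

/-- Abstract exponential stability theorem (Theorem A.1): a nonnegative energy `E`
whose decay between any two times is controlled above and below by the time
integral of a nonnegative locally integrable damping rate `D`, and which satisfies
an observability-through-damping inequality on all windows of some fixed length
`T > 4c`, decays exponentially. -/
theorem abstract_exponential_stability
    (E D : ℝ → ℝ)
    (hE_nonneg : ∀ t, 0 ≤ t → 0 ≤ E t)
    (hD_nonneg : ∀ t, 0 ≤ D t)
    (hD_loc : LocallyIntegrableOn D (Set.Ici (0 : ℝ)))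
    (c₁E c₂E c cT : ℝ)
    (hc₁E : 0 < c₁E) (hc₂E : 0 < c₂E) (hc : 0 < c) (hcT : 0 < cT)
    (hdecay : ∀ t₁ t₂ : ℝ, 0 ≤ t₁ → t₁ < t₂ →
      E t₂ - E t₁ ≤ -c₁E * ∫ t in t₁..t₂, D t ∧
      -c₂E * ∫ t in t₁..t₂, D t ≤ E t₂ - E t₁)
    (hobs : ∃ T : ℝ, 4 * c < T ∧ ∀ a : ℝ, 0 ≤ a →
      (∫ t in a..(a + T), E t) ≤ c * (E a + E (a + T)) + cT * ∫ t in a..(a + T), D t) :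
    ∃ C lam : ℝ, 0 < C ∧ 0 < lam ∧
      ∀ t, 0 ≤ t → E t ≤ C * Real.exp (-lam * t) * E 0 := by
  obtain ⟨T, hT, hobs⟩ := hobs
  exact abstract_exponential_stability_general (hE_nonneg 0 le_rfl) (fun t _ => hD_nonneg t) hD_loc
    hc₁E hc hcT.le (by linarith) (fun t₁ t₂ h₁ h₁₂ => (hdecay t₁ t₂ h₁ h₁₂).1) hobs
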